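/- arXiv:2505.15569 — 2 statements merged into one kernel-verified Lean document; each statement's English description precedes it below -/
import Mathlib

section
/- For every finite subset E of ι with |E| = n and every 0 ≤ k ≤ n, the following identities hold in Λ(V): Σ_{A ⊆ E, |A| = k} (−p)^{θ(A, E∖A)} · f_A * f_{E∖A} = [n choose k]_p · f_E and Σ_{A ⊆ E, |A| = k} (−p)^{θ(E∖A, A)} · f_{E∖A} * f_A = [n choose k]_p · f_E. -/
/-- Heaviside theta symbol for finite sets: the number of pairs `(a, b) ∈ A × B` with `a > b`. -/
def Theta {ι : Type*} [LinearOrder ι] (A B : Finset ι) : ℕ :=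
  ∑ a ∈ A, ∑ b ∈ B, if b < a then 1 else 0

/-- Gaussian (q-)binomial coefficient `[n choose k]_p`. -/
def qbinom {R : Type*} [CommRing R] (p : R) : ℕ → ℕ → R
  | _, 0 => 1
  | 0, _ + 1 => 0
  | n + 1, k + 1 => qbinom p n (k + 1) + p ^ (n - k) * qbinom p n k

/-- The set-theoretic basis element `f_E` of the exterior algebra: the product of the
generators `ι(e b)`, `b ∈ E`, taken in increasing order. -/
noncomputable def fSet (F : Type*) [Field F] {ι : Type*} [LinearOrder ι] (E : Finset ι) :
    ExteriorAlgebra F (ι →₀ F) :=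
  ((E.sort (· ≤ ·)).map fun b => ExteriorAlgebra.ι F (Finsupp.single b 1)).prod

/-!
Sorting the product `f_A * f_B` costs a factor `-1` for each of the `θ(A, B)` inversions, so the
weight `(-p) ^ θ(A, B)` turns every term into `p ^ θ(A, B) • f_E`, and what remains is the classical
inversion count `∑ p ^ θ(A, E ∖ A) = [n choose k]_p`. The argument is the same when each
transposition costs an arbitrary scalar `q` instead of `-1`. Both the sorting and the counting go by
induction, removing the minimum of `E`: it contributes no inversion when it lies in the left set,
and one per element of the left set when it lies in the right one. Reversing the order of `ι`
exchanges the counts of `θ(A, E ∖ A)` and `θ(E ∖ A, A)`.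
-/

section Theta

variable {ι : Type*} [LinearOrder ι] {A B : Finset ι} {m : ι}

theorem theta_insert_left_of_lt (hm : ∀ b ∈ B, m < b) : Theta (insert m A) B = Theta A B := by
  have hzero : ∑ b ∈ B, (if b < m then 1 else 0) = 0 :=
    Finset.sum_eq_zero fun b hb => if_neg (hm b hb).not_gt
  exact Finset.sum_insert_of_eq_zero_if_notMem fun _ => hzero

theorem theta_insert_right_of_lt (hm : ∀ a ∈ A, m < a) (hmB : m ∉ B) :
    Theta A (insert m B) = A.card + Theta A B := by
  have hcard : ∑ a ∈ A, (if m < a then 1 else 0) = A.card := by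
    rw [Finset.sum_congr rfl fun a ha => if_pos (hm a ha), Finset.card_eq_sum_ones]
  simp only [Theta, Finset.sum_insert hmB, Finset.sum_add_distrib, hcard]

theorem theta_map_toDual (A B : Finset ι) :
    Theta (A.map OrderDual.toDual.toEmbedding) (B.map OrderDual.toDual.toEmbedding) =
      Theta B A := by
  simp only [Theta, Finset.sum_map, Equiv.coe_toEmbedding, OrderDual.toDual_lt_toDual]
  exact Finset.sum_comm

end Theta

section GaussianBinomial

theorem sum_powersetCard_succ_insert {α M : Type*} [DecidableEq α] [AddCommMonoid M] {m : α}
    {E : Finset α} (hm : m ∉ E) (k : ℕ) (g : Finset α → M) :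
    ∑ A ∈ (insert m E).powersetCard (k + 1), g A =
      ∑ A ∈ E.powersetCard (k + 1), g A + ∑ A ∈ E.powersetCard k, g (insert m A) := by
  have notMem {j : ℕ} {A : Finset α} (hA : A ∈ E.powersetCard j) : m ∉ A :=
    Finset.notMem_mono (Finset.mem_powersetCard.1 hA).1 hm
  have hdisj : Disjoint (E.powersetCard (k + 1)) ((E.powersetCard k).image (insert m)) := by
    refine Finset.disjoint_left.2 fun A hA hA' => ?_
    obtain ⟨B, -, rfl⟩ := Finset.mem_image.1 hA'
    exact notMem hA (Finset.mem_insert_self m B)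
  rw [Finset.powersetCard_succ_insert hm, Finset.sum_union hdisj,
    Finset.sum_image (Finset.insert_erase_invOn.2.injOn.mono fun _ hA => notMem hA)]

variable {R ι : Type*} [CommRing R] [LinearOrder ι]

theorem sum_pow_theta_sdiff_left (p : R) (E : Finset ι) (k : ℕ) :
    ∑ A ∈ E.powersetCard k, p ^ Theta (E \ A) A = qbinom p E.card k := by
  induction E using Finset.induction_on_min generalizing k with
  | empty => cases k <;> simp [qbinom, Theta]
  | insert m E hm ih =>
    have hmE : m ∉ E := fun h => lt_irrefl m (hm m h)
    cases k with
    | zero => simp [qbinom, Theta]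
    | succ k =>
      have theta_of_notMem : ∀ A ∈ E.powersetCard (k + 1),
          Theta (insert m E \ A) A = Theta (E \ A) A := by
        intro A hA
        have hAE := (Finset.mem_powersetCard.1 hA).1
        rw [Finset.insert_sdiff_of_notMem _ (Finset.notMem_mono hAE hmE),
          theta_insert_left_of_lt fun a ha => hm a (hAE ha)]
      have theta_of_mem : ∀ A ∈ E.powersetCard k,
          Theta (insert m E \ insert m A) (insert m A) = E.card - k + Theta (E \ A) A := by
        intro A hA
        obtain ⟨hAE, hcard⟩ := Finset.mem_powersetCard.1 hA
        rw [Finset.insert_sdiff_insert, Finset.sdiff_insert_of_notMem hmE,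
          theta_insert_right_of_lt (fun a ha => hm a (Finset.mem_sdiff.1 ha).1)
            (Finset.notMem_mono hAE hmE),
          Finset.card_sdiff_of_subset hAE, hcard]
      calc ∑ A ∈ (insert m E).powersetCard (k + 1), p ^ Theta (insert m E \ A) A
          = ∑ A ∈ E.powersetCard (k + 1), p ^ Theta (E \ A) A +
              ∑ A ∈ E.powersetCard k, p ^ (E.card - k + Theta (E \ A) A) := by
            rw [sum_powersetCard_succ_insert hmE]
            exact congrArg₂ (· + ·)
              (Finset.sum_congr rfl fun A hA => by rw [theta_of_notMem A hA])
              (Finset.sum_congr rfl fun A hA => by rw [theta_of_mem A hA])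
        _ = qbinom p E.card (k + 1) + p ^ (E.card - k) * qbinom p E.card k := by
            simp only [pow_add, ← Finset.mul_sum, ih]
        _ = qbinom p (insert m E).card (k + 1) := by
            rw [Finset.card_insert_of_notMem hmE, qbinom]

theorem sum_pow_theta_sdiff_right (p : R) (E : Finset ι) (k : ℕ) :
    ∑ A ∈ E.powersetCard k, p ^ Theta A (E \ A) = qbinom p E.card k := by
  have hdual := sum_pow_theta_sdiff_left p (E.map OrderDual.toDual.toEmbedding) k
  simpa only [Finset.powersetCard_map, Finset.sum_map, RelEmbedding.coe_toEmbedding,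
    Finset.mapEmbedding_apply, ← Finset.map_sdiff, theta_map_toDual, Finset.card_map] using hdual

end GaussianBinomial

section SortedProduct

/-- The product of the family `x` over the finite set `E`, taken in increasing order of the index.
For `x b = ExteriorAlgebra.ι F (Finsupp.single b 1)` it is `fSet F E`. -/
def sortedProd {ι S : Type*} [LinearOrder ι] [Monoid S] (x : ι → S) (E : Finset ι) : S :=
  (E.sort.map x).prod

section Monoid

variable {ι S : Type*} [LinearOrder ι] [Monoid S]

theorem sortedProd_empty (x : ι → S) : sortedProd x ∅ = 1 := by
  simp only [sortedProd, Finset.sort_empty, List.map_nil, List.prod_nil]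

theorem sortedProd_insert_of_lt (x : ι → S) {m : ι} {A : Finset ι} (hm : ∀ a ∈ A, m < a) :
    sortedProd x (insert m A) = x m * sortedProd x A := by
  rw [sortedProd, Finset.sort_insert _ (fun a ha => (hm a ha).le) fun h => lt_irrefl m (hm m h),
    List.map_cons, List.prod_cons, sortedProd]

end Monoid

variable {R S ι : Type*} [CommRing R] [Semiring S] [Algebra R S] [LinearOrder ι] {q : R} {x : ι → S}

theorem sortedProd_mul_of_lt (hx : ∀ a b, a < b → x b * x a = q • (x a * x b)) {m : ι}
    {A : Finset ι} (hm : ∀ a ∈ A, m < a) :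
    sortedProd x A * x m = q ^ A.card • (x m * sortedProd x A) := by
  induction A using Finset.induction_on_min with
  | empty => simp only [sortedProd_empty, one_mul, mul_one, Finset.card_empty, pow_zero, one_smul]
  | insert c A hc ih =>
    obtain ⟨hmc, hmA⟩ := (Finset.forall_mem_insert _ _ _).1 hm
    rw [sortedProd_insert_of_lt x hc, Finset.card_insert_of_notMem fun h => lt_irrefl c (hc c h)]
    calc x c * sortedProd x A * x m
        = q ^ A.card • (x c * x m * sortedProd x A) := by
          rw [mul_assoc, ih hmA, mul_smul_comm, mul_assoc]
      _ = q ^ (A.card + 1) • (x m * (x c * sortedProd x A)) := by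
          rw [hx m c hmc, smul_mul_assoc, smul_smul, pow_succ, mul_assoc]

theorem sortedProd_mul_sortedProd (hx : ∀ a b, a < b → x b * x a = q • (x a * x b))
    {A B : Finset ι} (hAB : Disjoint A B) :
    sortedProd x A * sortedProd x B = q ^ Theta A B • sortedProd x (A ∪ B) := by
  induction hE : A ∪ B using Finset.induction_on_min generalizing A B with
  | empty =>
    obtain ⟨rfl, rfl⟩ := Finset.union_eq_empty.1 hE
    simp only [sortedProd_empty, mul_one, Theta, Finset.sum_empty, pow_zero, one_smul]
  | insert m E hm ih =>
    have hmE : m ∉ E := fun h => lt_irrefl m (hm m h)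
    rcases Finset.mem_union.1 (hE ▸ Finset.mem_insert_self m E) with hmA | hmB
    · obtain ⟨A, hmA', rfl⟩ : ∃ A', m ∉ A' ∧ insert m A' = A :=
        ⟨A.erase m, Finset.notMem_erase m A, Finset.insert_erase hmA⟩
      obtain ⟨hmB, hAB'⟩ := Finset.disjoint_insert_left.1 hAB
      obtain rfl : A ∪ B = E := by
        rw [← Finset.erase_insert hmE, ← hE, Finset.insert_union,
          Finset.erase_insert (Finset.notMem_union.2 ⟨hmA', hmB⟩)]
      have hlt_A : ∀ a ∈ A, m < a := fun a ha => hm a (Finset.mem_union_left B ha)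
      have hlt_B : ∀ b ∈ B, m < b := fun b hb => hm b (Finset.mem_union_right A hb)
      rw [sortedProd_insert_of_lt x hlt_A, mul_assoc, ih hAB' rfl, mul_smul_comm,
        theta_insert_left_of_lt hlt_B, sortedProd_insert_of_lt x hm]
    · obtain ⟨B, hmB', rfl⟩ : ∃ B', m ∉ B' ∧ insert m B' = B :=
        ⟨B.erase m, Finset.notMem_erase m B, Finset.insert_erase hmB⟩
      obtain ⟨hmA, hAB'⟩ := Finset.disjoint_insert_right.1 hAB
      obtain rfl : A ∪ B = E := by
        rw [← Finset.erase_insert hmE, ← hE, Finset.union_insert,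
          Finset.erase_insert (Finset.notMem_union.2 ⟨hmA, hmB'⟩)]
      have hlt_A : ∀ a ∈ A, m < a := fun a ha => hm a (Finset.mem_union_left B ha)
      have hlt_B : ∀ b ∈ B, m < b := fun b hb => hm b (Finset.mem_union_right A hb)
      rw [sortedProd_insert_of_lt x hlt_B, ← mul_assoc, sortedProd_mul_of_lt hx hlt_A,
        smul_mul_assoc, mul_assoc, ih hAB' rfl, mul_smul_comm, smul_smul, ← pow_add,
        theta_insert_right_of_lt hlt_A hmB', sortedProd_insert_of_lt x hm]

theorem pow_theta_smul_sortedProd_mul_sortedProd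
    (hx : ∀ a b, a < b → x b * x a = q • (x a * x b)) (r : R) {A B : Finset ι}
    (hAB : Disjoint A B) :
    r ^ Theta A B • (sortedProd x A * sortedProd x B) =
      (r * q) ^ Theta A B • sortedProd x (A ∪ B) := by
  rw [sortedProd_mul_sortedProd hx hAB, smul_smul, ← mul_pow]

theorem bubble_identity_general (hx : ∀ a b, a < b → x b * x a = q • (x a * x b)) (r : R)
    (E : Finset ι) (k : ℕ) :
    (∑ A ∈ E.powersetCard k, r ^ Theta A (E \ A) • (sortedProd x A * sortedProd x (E \ A)))
        = qbinom (r * q) E.card k • sortedProd x E ∧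
    (∑ A ∈ E.powersetCard k, r ^ Theta (E \ A) A • (sortedProd x (E \ A) * sortedProd x A))
        = qbinom (r * q) E.card k • sortedProd x E := by
  constructor
  · rw [← sum_pow_theta_sdiff_right, Finset.sum_smul]
    refine Finset.sum_congr rfl fun A hA => ?_
    rw [pow_theta_smul_sortedProd_mul_sortedProd hx r Finset.disjoint_sdiff,
      Finset.union_sdiff_of_subset (Finset.mem_powersetCard.1 hA).1]
  · rw [← sum_pow_theta_sdiff_left, Finset.sum_smul]
    refine Finset.sum_congr rfl fun A hA => ?_
    rw [pow_theta_smul_sortedProd_mul_sortedProd hx r Finset.sdiff_disjoint,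
      Finset.sdiff_union_of_subset (Finset.mem_powersetCard.1 hA).1]

end SortedProduct

theorem exteriorAlgebra_ι_mul_swap {R M : Type*} [CommRing R] [AddCommGroup M] [Module R M]
    (v w : M) :
    ExteriorAlgebra.ι R w * ExteriorAlgebra.ι R v =
      (-1 : R) • (ExteriorAlgebra.ι R v * ExteriorAlgebra.ι R w) := by
  rw [neg_one_smul, eq_neg_iff_add_eq_zero, ExteriorAlgebra.ι_add_mul_swap]

/-- The MOY bubble identities in `Λ_p(V)`:
`Σ_{A ⊆ E, |A| = k} (−p)^{θ(A,E∖A)} f_A f_{E∖A} = [n choose k]_p f_E` and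
`Σ_{A ⊆ E, |A| = k} (−p)^{θ(E∖A,A)} f_{E∖A} f_A = [n choose k]_p f_E`. -/
theorem bubble_identity (F : Type*) [Field F] (p : F) (ι : Type*) [LinearOrder ι]
    (E : Finset ι) (n k : ℕ) (hE : E.card = n) (hk : k ≤ n) :
    (∑ A ∈ E.powersetCard k, (-p) ^ Theta A (E \ A) • (fSet F A * fSet F (E \ A)))
        = qbinom p n k • fSet F E ∧
    (∑ A ∈ E.powersetCard k, (-p) ^ Theta (E \ A) A • (fSet F (E \ A) * fSet F A))
        = qbinom p n k • fSet F E := by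
  subst hE
  simpa only [fSet, sortedProd, neg_mul_neg, mul_one] using
    bubble_identity_general (q := -1) (x := fun b => ExteriorAlgebra.ι F (Finsupp.single b 1))
      (fun _ _ _ => exteriorAlgebra_ι_mul_swap _ _) (-p) E k
end

section
/- Let R be a commutative ring and p ∈ R. For all natural numbers m, n, k: Σ_{i=0}^{k} (−1)^i p^{i(i−1)/2} · [m choose i]_p · [m+n−i choose k−i]_p = p^{mk} · [n choose k]_p (the terms with i > m vanish since [m choose i]_p = 0 for i > m). -/
/-! Let `T` be the shift `(T f)(N, K) = f(N - 1, K - 1)`. By the q-binomial theorem the sum is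
`∏_{j < m} (1 - p ^ j T)` applied to `[N choose K]_p` at `(N, K) = (m + n, k)`. By the dual Pascal
rule, the `j`-th factor sends `p ^ (j K) [N - j choose K]_p` to
`p ^ ((j + 1) K) [N - j - 1 choose K]_p`, so the product telescopes. -/

section GaussianBinomial

variable {R : Type*} [CommRing R] (p : R)

@[simp]
theorem qbinom_zero_right (n : ℕ) : qbinom p n 0 = 1 := by
  rw [qbinom]

@[simp]
theorem qbinom_zero_succ (k : ℕ) : qbinom p 0 (k + 1) = 0 := by
  rw [qbinom]

theorem qbinom_succ_succ (n k : ℕ) :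
    qbinom p (n + 1) (k + 1) = qbinom p n (k + 1) + p ^ (n - k) * qbinom p n k := by
  rw [qbinom]

theorem qbinom_eq_zero_of_lt {n k : ℕ} (h : n < k) : qbinom p n k = 0 := by
  induction n generalizing k with
  | zero =>
    obtain ⟨k, rfl⟩ := Nat.exists_eq_add_one.mpr h
    exact qbinom_zero_succ p k
  | succ n ih =>
    obtain ⟨k, rfl⟩ := Nat.exists_eq_add_one.mpr (Nat.zero_lt_of_lt h)
    rw [qbinom_succ_succ, ih (by lia), ih (by lia), mul_zero, add_zero]

-- For `k > N` the subtraction truncates, but then `[n choose k]_p = 0`.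
theorem pow_sub_mul_pow_mul_qbinom {n N : ℕ} (h : n ≤ N) (k : ℕ) :
    p ^ (N - k) * p ^ k * qbinom p n k = p ^ N * qbinom p n k := by
  rcases le_or_gt k N with hk | hk
  · rw [pow_sub_mul_pow p hk]
  · simp only [qbinom_eq_zero_of_lt p (h.trans_lt hk), mul_zero]

theorem qbinom_succ_succ' (n k : ℕ) :
    qbinom p (n + 1) (k + 1) = p ^ (k + 1) * qbinom p n (k + 1) + qbinom p n k := by
  induction n generalizing k with
  | zero => cases k <;> simp [qbinom_succ_succ]
  | succ n ih =>
    cases k with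
    | zero =>
      calc qbinom p (n + 2) 1
        _ = qbinom p (n + 1) 1 + p ^ (n + 1) := by simp [qbinom_succ_succ p (n + 1)]
        _ = (p * qbinom p n 1 + 1) + p ^ (n + 1) := by simp [ih 0]
        _ = p * (qbinom p n 1 + p ^ n) + 1 := by ring
        _ = p ^ 1 * qbinom p (n + 1) 1 + qbinom p (n + 1) 0 := by simp [qbinom_succ_succ p n]
    | succ k =>
      have hcross : p ^ (n - k) * p ^ (k + 1) * qbinom p n (k + 1) =
          p ^ (k + 2) * p ^ (n - (k + 1)) * qbinom p n (k + 1) := by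
        have hsucc := pow_sub_mul_pow_mul_qbinom p (Nat.le_add_right n 1) (k + 1)
        rw [Nat.add_sub_add_right] at hsucc
        linear_combination hsucc - p * pow_sub_mul_pow_mul_qbinom p (le_refl n) (k + 1)
      calc qbinom p (n + 2) (k + 2)
        _ = qbinom p (n + 1) (k + 2) + p ^ (n - k) * qbinom p (n + 1) (k + 1) := by
          rw [qbinom_succ_succ p (n + 1) (k + 1), Nat.add_sub_add_right]
        _ = (p ^ (k + 2) * qbinom p n (k + 2) + qbinom p n (k + 1)) +
            p ^ (n - k) * (p ^ (k + 1) * qbinom p n (k + 1) + qbinom p n k) := by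
          rw [ih (k + 1), ih k]
        _ = p ^ (k + 2) * (qbinom p n (k + 2) + p ^ (n - (k + 1)) * qbinom p n (k + 1)) +
            (qbinom p n (k + 1) + p ^ (n - k) * qbinom p n k) := by
          linear_combination hcross
        _ = p ^ (k + 2) * qbinom p (n + 1) (k + 2) + qbinom p (n + 1) (k + 1) := by
          rw [← qbinom_succ_succ p n (k + 1), ← qbinom_succ_succ p n k]

end GaussianBinomial

section QPochhammer

variable {R : Type*} [CommRing R] (p : R)

/-- The coefficient of `x ^ i` in the q-Pochhammer symbol `∏_{j < m} (1 - p ^ j x)`, in the closed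
form given by the q-binomial theorem. -/
def qPochhammerCoeff (m i : ℕ) : R :=
  (-1) ^ i * p ^ (i * (i - 1) / 2) * qbinom p m i

@[simp]
theorem qPochhammerCoeff_zero_right (m : ℕ) : qPochhammerCoeff p m 0 = 1 := by
  simp [qPochhammerCoeff]

@[simp]
theorem qPochhammerCoeff_zero_succ (i : ℕ) : qPochhammerCoeff p 0 (i + 1) = 0 := by
  simp [qPochhammerCoeff]

-- Comparison of coefficients in `∏_{j ≤ m} (1 - p ^ j x) = (1 - p ^ m x) ∏_{j < m} (1 - p ^ j x)`.
theorem qPochhammerCoeff_succ_succ (m i : ℕ) :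
    qPochhammerCoeff p (m + 1) (i + 1) =
      qPochhammerCoeff p m (i + 1) - p ^ m * qPochhammerCoeff p m i := by
  simp only [qPochhammerCoeff, qbinom_succ_succ, Nat.triangle_succ, pow_add]
  linear_combination -(-1) ^ i * p ^ (i * (i - 1) / 2) * pow_sub_mul_pow_mul_qbinom p (le_refl m) i

theorem sum_qPochhammerCoeff_succ_mul (f : ℕ → R) (m k : ℕ) :
    ∑ i ∈ Finset.range (k + 1), qPochhammerCoeff p (m + 1) i * f i =
      ∑ i ∈ Finset.range (k + 1), qPochhammerCoeff p m i * f i -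
        p ^ m * ∑ i ∈ Finset.range k, qPochhammerCoeff p m i * f (i + 1) := by
  simp only [Finset.sum_range_succ', qPochhammerCoeff_succ_succ, qPochhammerCoeff_zero_right,
    sub_mul, Finset.sum_sub_distrib, Finset.mul_sum, mul_assoc]
  ring

end QPochhammer

/-- The q-Vandermonde evaluation:
`Σ_{i=0}^{k} (−1)^i p^{i(i−1)/2} [m choose i]_p [m+n−i choose k−i]_p = p^{mk} [n choose k]_p`. -/
theorem q_vandermonde_evaluation (R : Type*) [CommRing R] (p : R) (m n k : ℕ) :
    (∑ i ∈ Finset.range (k + 1),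
        (-1 : R) ^ i * p ^ (i * (i - 1) / 2) * qbinom p m i * qbinom p (m + n - i) (k - i)) =
      p ^ (m * k) * qbinom p n k := by
  change ∑ i ∈ Finset.range (k + 1), qPochhammerCoeff p m i * qbinom p (m + n - i) (k - i) = _
  induction m generalizing n k with
  | zero => simp [Finset.sum_range_succ']
  | succ m ih =>
    cases k with
    | zero => simp
    | succ k =>
      have unshifted := ih (n + 1) (k + 1)
      have shifted := ih n k
      rw [← add_assoc] at unshifted
      rw [sum_qPochhammerCoeff_succ_mul, Nat.add_right_comm m 1 n]
      simp only [Nat.add_sub_add_right]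
      rw [unshifted, shifted, qbinom_succ_succ']
      ring
end
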